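/- Let ω be a weight on [0,1) with ω∈𝒟 and ω̂(r)>0 for all r∈[0,1), and define W(r)=ω̂(r)/(1−r) for r∈[0,1). Then W is a weight on [0,1) (in particular ∫_0^1 W(t)dt<∞), and there exists a constant C≥1 such that C⁻¹·ω̂(r) ≤ Ŵ(r) ≤ C·ω̂(r) for all r∈[0,1), where Ŵ(r)=∫_r^1 W(t)dt; consequently W is a regular weight, i.e. there exist C'>0 and δ∈(0,1) such that 1/C' < Ŵ(r)/((1−r)W(r)) < C' for all r∈(δ,1). -/

import Mathlib

/-!
Write `W(r) = ω̂(r)/(1-r)`. Everything rests on the two-sided estimate `Ŵ ≍ ω̂`.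

*Upper bound.* The map `φ(s) = 1 - (1-s)/K` satisfies `dφ/(1-φ) = ds/(1-s)`, so the `𝒟̌` condition
gives `∫_{φ(r)}^{φ(b)} W ≤ C⁻¹ ∫_r^b W` for `r ≤ b < 1`. On `[r, φ(r)]` one has
`W ≤ ω̂(r)/(1-φ(r))`, hence `∫_r^{φ(r)} W ≤ (K-1) ω̂(r)`. As `b ≤ φ(b)`,
`∫_r^b W ≤ (K-1) ω̂(r) + C⁻¹ ∫_r^b W`, and since the truncated integral is finite it can be
absorbed: `∫_r^b W ≤ (K-1)/(1-C⁻¹) ω̂(r)` uniformly in `b` (`trunc_bound`). Letting `b → 1` yields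
both the integrability of `W` and `Ŵ ≲ ω̂`.

*Lower bound.* On `[r, (1+r)/2]` one has `W ≥ ω̂((1+r)/2)/(1-r)`, and the `𝒟̂` condition bounds this
below by a multiple of `ω̂(r)/(1-r)` (`lower_bound`).

Regularity is a restatement of `Ŵ ≍ ω̂`, because `(1-r) W(r) = ω̂(r)`.
-/

open MeasureTheory Metric Filter

noncomputable section

/-- A weight on `[0,1)`: a non-negative, measurable, integrable function. -/
def IsWeight (ω : ℝ → ℝ) : Prop :=
  (∀ r ∈ Set.Ico (0:ℝ) 1, 0 ≤ ω r) ∧ Measurable ω ∧ IntegrableOn ω (Set.Ico 0 1)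

/-- `ω̂(r) = ∫_r^1 ω(t) dt`. -/
def wh (ω : ℝ → ℝ) (r : ℝ) : ℝ := ∫ t in Set.Ioo r 1, ω t

/-- The class `Dhat` of upper doubling weights. -/
def DHat (ω : ℝ → ℝ) : Prop :=
  ∃ C : ℝ, 1 ≤ C ∧ ∀ r ∈ Set.Ico (0:ℝ) 1, wh ω r ≤ C * wh ω ((1 + r) / 2)

/-- The class `Dcheck`: there exist `C, K > 1` with `ω̂(r) ≥ C·ω̂(1-(1-r)/K)`. -/
def DCheck (ω : ℝ → ℝ) : Prop :=
  ∃ C K : ℝ, 1 < C ∧ 1 < K ∧ ∀ r ∈ Set.Ico (0:ℝ) 1,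
    C * wh ω (1 - (1 - r) / K) ≤ wh ω r

/-- `D = Dhat ∩ Dcheck`. -/
def DD (ω : ℝ → ℝ) : Prop := DHat ω ∧ DCheck ω

lemma wh_antitone {ω : ℝ → ℝ} (hω : IsWeight ω) {r s : ℝ} (hr : 0 ≤ r) (hrs : r ≤ s) :
    wh ω s ≤ wh ω r := by
  unfold wh
  refine setIntegral_mono_set (hω.2.2.mono_set fun t ht => ⟨hr.trans ht.1.le, ht.2⟩) ?_
    (Set.Ioo_subset_Ioo_left hrs).eventuallyLE
  filter_upwards [ae_restrict_mem measurableSet_Ioo] with t ht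
  exact hω.1 t ⟨hr.trans ht.1.le, ht.2⟩

lemma wh_nonneg {ω : ℝ → ℝ} (hω : IsWeight ω) {r : ℝ} (hr : 0 ≤ r) : 0 ≤ wh ω r :=
  setIntegral_nonneg measurableSet_Ioo fun t ht => hω.1 t ⟨hr.trans ht.1.le, ht.2⟩

lemma wh_eq_intervalIntegral (ω : ℝ → ℝ) {r : ℝ} (hr : r ≤ 1) : wh ω r = ∫ t in r..1, ω t := by
  rw [intervalIntegral.integral_of_le hr, integral_Ioc_eq_integral_Ioo, wh]

/-- Measurability on the whole line, including negative `r`, where `wh ω r` may be the junk value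
`0` of a divergent integral: `wh ω` is a parametric integral of a jointly measurable function. -/
lemma measurable_wh {ω : ℝ → ℝ} (hω : Measurable ω) : Measurable (wh ω) := by
  have hset : MeasurableSet {p : ℝ × ℝ | p.1 < p.2 ∧ p.2 < 1} :=
    (measurableSet_lt measurable_fst measurable_snd).inter
      (measurableSet_lt measurable_snd measurable_const)
  have h : StronglyMeasurable
      ({p : ℝ × ℝ | p.1 < p.2 ∧ p.2 < 1}.indicator fun p : ℝ × ℝ => ω p.2) :=
    ((hω.comp measurable_snd).indicator hset).stronglyMeasurable
  have h' := (h.integral_prod_right' (ν := volume)).measurable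
  convert h' using 2 with r
  rw [wh, ← integral_indicator measurableSet_Ioo]
  rfl

lemma continuousOn_W {ω : ℝ → ℝ} (hω : IsWeight ω) :
    ContinuousOn (fun r => wh ω r / (1 - r)) (Set.Ico 0 1) := by
  have hint : IntegrableOn ω (Set.uIcc 0 1) := by
    rw [Set.uIcc_of_le zero_le_one, integrableOn_Icc_iff_integrableOn_Ico]
    exact hω.2.2
  have h1 := intervalIntegral.continuousOn_primitive_interval_left hint
  rw [Set.uIcc_of_le zero_le_one] at h1
  refine ContinuousOn.div ((h1.mono Set.Ico_subset_Icc_self).congr fun r hr =>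
    wh_eq_intervalIntegral ω hr.2.le) (by fun_prop) fun r hr => ?_
  linarith [hr.2]

lemma W_nonneg {ω : ℝ → ℝ} (hω : IsWeight ω) {r : ℝ} (hr : r ∈ Set.Ico (0:ℝ) 1) :
    0 ≤ wh ω r / (1 - r) :=
  div_nonneg (wh_nonneg hω hr.1) (by linarith [hr.2])

lemma intervalIntegrable_W {ω : ℝ → ℝ} (hω : IsWeight ω) {a b : ℝ} (ha : a ∈ Set.Ico (0:ℝ) 1)
    (hb : b ∈ Set.Ico (0:ℝ) 1) :
    IntervalIntegrable (fun r => wh ω r / (1 - r)) volume a b :=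
  ((continuousOn_W hω).mono (Set.ordConnected_Ico.uIcc_subset ha hb)).intervalIntegrable

/-- The absorption step: truncated integrals of `W` are bounded by `ω̂(r)`, uniformly in the
truncation point `b`. -/
lemma trunc_bound {ω : ℝ → ℝ} (hω : IsWeight ω) {C K : ℝ} (hC : 1 < C) (hK : 1 < K)
    (h : ∀ r ∈ Set.Ico (0:ℝ) 1, C * wh ω (1 - (1 - r) / K) ≤ wh ω r) {r b : ℝ} (hr : 0 ≤ r)
    (hrb : r ≤ b) (hb : b < 1) :
    ∫ t in r..b, wh ω t / (1 - t) ≤ (K - 1) / (1 - C⁻¹) * wh ω r := by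
  have hK0 : 0 < K := by linarith
  have hC0 : 0 < C := by linarith
  have hφ : ∀ s ∈ Set.Ico (0:ℝ) 1, s ≤ 1 - (1 - s) / K ∧ 1 - (1 - s) / K < 1 := by
    intro s hs
    have h1 : 0 < 1 - s := by linarith [hs.2]
    have h2 : (1 - s) / K ≤ 1 - s := div_le_self h1.le hK.le
    have h3 : 0 < (1 - s) / K := by positivity
    constructor <;> linarith
  have hrI : r ∈ Set.Ico (0:ℝ) 1 := ⟨hr, hrb.trans_lt hb⟩
  have hbI : b ∈ Set.Ico (0:ℝ) 1 := ⟨hr.trans hrb, hb⟩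
  have hφI : ∀ s ∈ Set.Ico (0:ℝ) 1, 1 - (1 - s) / K ∈ Set.Ico (0:ℝ) 1 := fun s hs =>
    ⟨hs.1.trans (hφ s hs).1, (hφ s hs).2⟩
  have e1 := intervalIntegral.integral_add_adjacent_intervals
    (intervalIntegrable_W hω hrI (hφI r hrI)) (intervalIntegrable_W hω (hφI r hrI) hbI)
  have e2 := intervalIntegral.integral_add_adjacent_intervals
    (intervalIntegrable_W hω (hφI r hrI) hbI) (intervalIntegrable_W hω hbI (hφI b hbI))
  have hnn : 0 ≤ ∫ t in b..(1 - (1 - b) / K), wh ω t / (1 - t) :=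
    intervalIntegral.integral_nonneg (hφ b hbI).1 fun t ht =>
      W_nonneg hω ⟨hbI.1.trans ht.1, ht.2.trans_lt (hφ b hbI).2⟩
  have hfirst : ∫ t in r..(1 - (1 - r) / K), wh ω t / (1 - t) ≤ (K - 1) * wh ω r := by
    have hr1 : 0 < 1 - r := by linarith [hrI.2]
    have := intervalIntegral.integral_mono_on (hφ r hrI).1
      (intervalIntegrable_W hω hrI (hφI r hrI))
      (intervalIntegrable_const (c := wh ω r / ((1 - r) / K)))
      fun t ht => div_le_div₀ (wh_nonneg hω hr) (wh_antitone hω hr ht.1) (by positivity)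
        (by linarith [ht.2])
    refine this.trans (le_of_eq ?_)
    rw [intervalIntegral.integral_const, smul_eq_mul]
    field_simp
    ring
  have hsecond : ∫ t in (1 - (1 - r) / K)..(1 - (1 - b) / K), wh ω t / (1 - t) ≤
      C⁻¹ * ∫ t in r..b, wh ω t / (1 - t) := by
    have hsub := intervalIntegral.mul_integral_comp_add_mul (a := r) (b := b)
      (f := fun t => wh ω t / (1 - t)) (c := K⁻¹) (d := 1 - K⁻¹)
    have hφ' : ∀ s, 1 - K⁻¹ + K⁻¹ * s = 1 - (1 - s) / K := fun s => by field_simp; ring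
    simp only [hφ'] at hsub
    rw [← hsub, ← intervalIntegral.integral_const_mul, ← intervalIntegral.integral_const_mul]
    have hmaps : Set.MapsTo (fun s => 1 - (1 - s) / K) (Set.uIcc r b) (Set.Ico (0:ℝ) 1) :=
      fun s hs => hφI s (Set.ordConnected_Ico.uIcc_subset hrI hbI hs)
    refine intervalIntegral.integral_mono_on hrb ?_ ((intervalIntegrable_W hω hrI hbI).const_mul _)
      fun s hs => ?_
    · exact (((continuousOn_W hω).comp (by fun_prop) hmaps).intervalIntegrable).const_mul _
    · have hsI : s ∈ Set.Ico (0:ℝ) 1 := ⟨hr.trans hs.1, hs.2.trans_lt hb⟩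
      have hs1 : 0 < 1 - s := by linarith [hsI.2]
      have hs2 : K⁻¹ * (wh ω (1 - (1 - s) / K) / (1 - (1 - (1 - s) / K))) =
          wh ω (1 - (1 - s) / K) / (1 - s) := by
        rw [sub_sub_cancel]
        field_simp
      rw [hs2, ← mul_div_assoc]
      gcongr
      rw [le_inv_mul_iff₀ hC0]
      exact h s hsI
  have hC1 : 0 < 1 - C⁻¹ := by
    have := inv_lt_one_of_one_lt₀ hC
    linarith
  rw [div_mul_eq_mul_div, le_div_iff₀ hC1]
  linarith

lemma integrableOn_W {ω : ℝ → ℝ} (hω : IsWeight ω) (hD : DCheck ω) :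
    IntegrableOn (fun r => wh ω r / (1 - r)) (Set.Icc 0 1) := by
  obtain ⟨C, K, hC, hK, h⟩ := hD
  rw [integrableOn_Icc_iff_integrableOn_Ioc]
  have hb : ∀ n : ℕ, (1 - 1 / ((n:ℝ) + 1)) ∈ Set.Ico (0:ℝ) 1 := by
    intro n
    have h1 : 0 < 1 / ((n:ℝ) + 1) := by positivity
    have h2 : 1 / ((n:ℝ) + 1) ≤ 1 := by
      rw [div_le_one (by positivity)]
      linarith [(Nat.cast_nonneg n : (0:ℝ) ≤ n)]
    constructor <;> linarith
  refine integrableOn_Ioc_of_intervalIntegral_norm_bounded_right (l := atTop)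
    (b := fun n : ℕ => 1 - 1 / ((n:ℝ) + 1)) (I := (K - 1) / (1 - C⁻¹) * wh ω 0) (fun n => ?_) ?_
    (Eventually.of_forall fun n => ?_)
  · exact (intervalIntegrable_iff_integrableOn_Ioc_of_le (hb n).1).1
      (intervalIntegrable_W hω ⟨le_rfl, one_pos⟩ (hb n))
  · simpa using tendsto_one_div_add_atTop_nhds_zero_nat.const_sub (1:ℝ)
  · refine le_trans (le_of_eq ?_) (trunc_bound hω hC hK h le_rfl (hb n).1 (hb n).2)
    rw [intervalIntegral.integral_of_le (hb n).1]
    refine setIntegral_congr_fun measurableSet_Ioc fun t ht => ?_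
    exact Real.norm_of_nonneg (W_nonneg hω ⟨ht.1.le, ht.2.trans_lt (hb n).2⟩)

lemma upper_bound {ω : ℝ → ℝ} (hω : IsWeight ω) {C K : ℝ} (hC : 1 < C) (hK : 1 < K)
    (h : ∀ r ∈ Set.Ico (0:ℝ) 1, C * wh ω (1 - (1 - r) / K) ≤ wh ω r) {r : ℝ}
    (hr : r ∈ Set.Ico (0:ℝ) 1) :
    wh (fun s => wh ω s / (1 - s)) r ≤ (K - 1) / (1 - C⁻¹) * wh ω r := by
  rw [wh_eq_intervalIntegral _ hr.2.le]
  have hcont := intervalIntegral.continuousOn_primitive_interval (a := r) (b := 1)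
    (f := fun s => wh ω s / (1 - s)) (μ := volume)
    ((integrableOn_W hω ⟨C, K, hC, hK, h⟩).mono_set (by
      rw [Set.uIcc_of_le hr.2.le]
      exact Set.Icc_subset_Icc_left hr.1))
  rw [Set.uIcc_of_le hr.2.le] at hcont
  have h1 : ContinuousWithinAt (fun x => ∫ t in r..x, wh ω t / (1 - t)) (Set.Ico r 1) 1 :=
    (hcont 1 ⟨hr.2.le, le_rfl⟩).mono Set.Ico_subset_Icc_self
  refine ContinuousWithinAt.closure_le (s := Set.Ico r 1) ?_ h1
    (continuousWithinAt_const (b := (K - 1) / (1 - C⁻¹) * wh ω r))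
    fun y hy => trunc_bound hω hC hK h hr.1 hy.1 hy.2
  rw [closure_Ico hr.2.ne]
  exact ⟨hr.2.le, le_rfl⟩

lemma lower_bound {ω : ℝ → ℝ} (hω : IsWeight ω) (hD : DCheck ω) {C : ℝ} (hC : 1 ≤ C)
    (h : ∀ r ∈ Set.Ico (0:ℝ) 1, wh ω r ≤ C * wh ω ((1 + r) / 2)) {r : ℝ}
    (hr : r ∈ Set.Ico (0:ℝ) 1) :
    (2 * C)⁻¹ * wh ω r ≤ wh (fun s => wh ω s / (1 - s)) r := by
  have hr1 : 0 < 1 - r := by linarith [hr.2]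
  have hC0 : 0 < C := by linarith
  have hm : (1 + r) / 2 ∈ Set.Ico (0:ℝ) 1 := ⟨by linarith [hr.1], by linarith [hr.2]⟩
  have hrm : r ≤ (1 + r) / 2 := by linarith
  have h1 := intervalIntegral.integral_mono_on hrm
    (intervalIntegrable_const (c := wh ω ((1 + r) / 2) / (1 - r))) (intervalIntegrable_W hω hr hm)
    fun t ht => div_le_div₀ (wh_nonneg hω (hr.1.trans ht.1))
      (wh_antitone hω (hr.1.trans ht.1) ht.2) (by linarith [ht.2, hm.2]) (by linarith [ht.1])
  have h2 : ∫ t in r..((1 + r) / 2), wh ω t / (1 - t) ≤ wh (fun s => wh ω s / (1 - s)) r := by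
    rw [intervalIntegral.integral_of_le hrm, wh]
    refine setIntegral_mono_set ((integrableOn_W hω hD).mono_set fun t ht =>
      ⟨hr.1.trans ht.1.le, ht.2.le⟩) ?_
      (LE.le.eventuallyLE fun t ht => ⟨ht.1, ht.2.trans_lt hm.2⟩)
    filter_upwards [ae_restrict_mem measurableSet_Ioo] with t ht
    exact W_nonneg hω ⟨hr.1.trans ht.1.le, ht.2⟩
  refine le_trans ?_ (h1.trans h2)
  rw [intervalIntegral.integral_const, smul_eq_mul]
  have h3 : ((1 + r) / 2 - r) * (wh ω ((1 + r) / 2) / (1 - r)) = wh ω ((1 + r) / 2) / 2 := by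
    field_simp
    ring
  rw [h3, inv_mul_le_iff₀ (by positivity)]
  linarith [h r hr]

theorem stmt_13 (ω : ℝ → ℝ) (hω : IsWeight ω) (hD : DD ω)
    (hpos : ∀ r ∈ Set.Ico (0:ℝ) 1, 0 < wh ω r) :
    IsWeight (fun r => wh ω r / (1 - r)) ∧
    ContinuousOn (fun r => wh ω r / (1 - r)) (Set.Ico 0 1) ∧
    (∃ C : ℝ, 1 ≤ C ∧ ∀ r ∈ Set.Ico (0:ℝ) 1,
      C⁻¹ * wh ω r ≤ wh (fun s => wh ω s / (1 - s)) r ∧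
      wh (fun s => wh ω s / (1 - s)) r ≤ C * wh ω r) ∧
    ∃ C' : ℝ, 0 < C' ∧ ∃ δ : ℝ, δ ∈ Set.Ioo (0:ℝ) 1 ∧ ∀ r ∈ Set.Ioo δ 1,
      1 / C' < wh (fun s => wh ω s / (1 - s)) r / ((1 - r) * (wh ω r / (1 - r))) ∧
      wh (fun s => wh ω s / (1 - s)) r / ((1 - r) * (wh ω r / (1 - r))) < C' := by
  have hW : IntegrableOn (fun r => wh ω r / (1 - r)) (Set.Icc 0 1) := integrableOn_W hω hD.2
  have hcomp : ∃ C : ℝ, 1 ≤ C ∧ ∀ r ∈ Set.Ico (0:ℝ) 1,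
      C⁻¹ * wh ω r ≤ wh (fun s => wh ω s / (1 - s)) r ∧
      wh (fun s => wh ω s / (1 - s)) r ≤ C * wh ω r := by
    obtain ⟨C₁, hC₁, h₁⟩ := hD.1
    obtain ⟨C₂, K, hC₂, hK, h₂⟩ := id hD.2
    refine ⟨max (2 * C₁) ((K - 1) / (1 - C₂⁻¹)), le_max_of_le_left (by linarith), fun r hr => ?_⟩
    have hw := (hpos r hr).le
    constructor
    · refine le_trans ?_ (lower_bound hω hD.2 hC₁ h₁ hr)
      gcongr
      exact le_max_left _ _
    · refine (upper_bound hω hC₂ hK h₂ hr).trans ?_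
      gcongr
      exact le_max_right _ _
  refine ⟨⟨fun r hr => W_nonneg hω hr, ?_, hW.mono_set Set.Ico_subset_Icc_self⟩,
    continuousOn_W hω, hcomp, ?_⟩
  · exact (measurable_wh hω.2.1).div (measurable_const.sub measurable_id)
  · obtain ⟨C, hC, h⟩ := hcomp
    -- Passing from `C` to `C + 1` makes both inequalities strict.
    refine ⟨C + 1, by linarith, 1 / 2, by norm_num, fun r hr => ?_⟩
    have hrI : r ∈ Set.Ico (0:ℝ) 1 := ⟨by linarith [hr.1], hr.2⟩
    have hw := hpos r hrI
    obtain ⟨hl, hu⟩ := h r hrI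
    rw [mul_div_cancel₀ _ (by linarith [hr.2] : 1 - r ≠ 0)]
    constructor
    · rw [lt_div_iff₀ hw]
      refine lt_of_lt_of_le ?_ hl
      rw [one_div]
      gcongr
      linarith
    · rw [div_lt_iff₀ hw]
      refine lt_of_le_of_lt hu ?_
      gcongr
      linarith
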